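/- Let T₁ and T₂ be sets of propositional formulas and let P, Q ⊆ L(T₁) ∪ L(T₂) be sets of variables with P ⊆ L(T₁) and P ∪ Q ⊇ L(T₂). Let γ be a set of formulas logically equivalent to Cn^{L(T₁) ∩ L(T₂)}(T₂). Then for every formula φ ∈ 𝓛(T₁), if Circ[T₁ ∪ γ;P;Q] ⊨ φ, then Circ[T₁ ∪ T₂;P;Q] ⊨ φ. -/

import Mathlib

namespace NMR

/-- Propositional formulas over a variable type `V`. -/
inductive PropForm (V : Type*) : Type _ where
  | var : V → PropForm V
  | tru : PropForm V
  | fls : PropForm V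
  | neg : PropForm V → PropForm V
  | conj : PropForm V → PropForm V → PropForm V
  | disj : PropForm V → PropForm V → PropForm V
  | impl : PropForm V → PropForm V → PropForm V

variable {V : Type*}

/-- Truth value of a formula under a valuation. -/
def PropForm.eval (ν : V → Bool) : PropForm V → Bool
  | .var v => ν v
  | .tru => true
  | .fls => false
  | .neg φ => !(φ.eval ν)
  | .conj φ ψ => φ.eval ν && ψ.eval ν
  | .disj φ ψ => φ.eval ν || ψ.eval ν
  | .impl φ ψ => !(φ.eval ν) || ψ.eval ν

/-- The set of variables occurring in a formula. -/
def PropForm.vars : PropForm V → Set V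
  | .var v => {v}
  | .tru => ∅
  | .fls => ∅
  | .neg φ => φ.vars
  | .conj φ ψ => φ.vars ∪ ψ.vars
  | .disj φ ψ => φ.vars ∪ ψ.vars
  | .impl φ ψ => φ.vars ∪ ψ.vars

/-- `ν ⊨ φ`. -/
def Sat (ν : V → Bool) (φ : PropForm V) : Prop := φ.eval ν = true

/-- `ν ⊨ T` for a set of formulas. -/
def SatSet (ν : V → Bool) (T : Set (PropForm V)) : Prop := ∀ φ ∈ T, Sat ν φ

/-- `T ⊨ φ`. -/
def Entails (T : Set (PropForm V)) (φ : PropForm V) : Prop :=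
  ∀ ν : V → Bool, SatSet ν T → Sat ν φ

/-- `T ⊨ Γ` for a set `Γ`. -/
def EntailsSet (T Γ : Set (PropForm V)) : Prop := ∀ φ ∈ Γ, Entails T φ

/-- A tautology is satisfied by every valuation. -/
def Tautology (φ : PropForm V) : Prop := ∀ ν : V → Bool, Sat ν φ

/-- `L(T)`: the set of variables occurring in a set of formulas. -/
def varsOf (T : Set (PropForm V)) : Set V := ⋃ φ ∈ T, φ.vars

/-- `𝓛(S)`: the set of formulas all of whose variables lie in `S`. -/
def FormsOver (S : Set V) : Set (PropForm V) := {φ | φ.vars ⊆ S}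

/-- `Cn^S(T)`: the formulas in `𝓛(S)` entailed by `T`. -/
def Cn (S : Set V) (T : Set (PropForm V)) : Set (PropForm V) :=
  {φ | φ.vars ⊆ S ∧ Entails T φ}

/-- Two sets of formulas are logically equivalent iff they have the same models. -/
def EquivTheories (T T' : Set (PropForm V)) : Prop :=
  ∀ ν : V → Bool, SatSet ν T ↔ SatSet ν T'

/-- `ν ≤_{P,Q} ν'`. -/
def circLe (P Q : Set V) (ν ν' : V → Bool) : Prop :=
  (∀ x, x ∉ P ∪ Q → ν x = ν' x) ∧
    {x | x ∈ P ∧ ν x = true} ⊆ {x | x ∈ P ∧ ν' x = true}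

/-- `ν <_{P,Q} ν'`. -/
def circLt (P Q : Set V) (ν ν' : V → Bool) : Prop :=
  circLe P Q ν ν' ∧ {x | x ∈ P ∧ ν x = true} ⊂ {x | x ∈ P ∧ ν' x = true}

/-- `ν` is a model of `Circ[T;P;Q]`. -/
def CircModel (T : Set (PropForm V)) (P Q : Set V) (ν : V → Bool) : Prop :=
  SatSet ν T ∧ ¬ ∃ ν' : V → Bool, SatSet ν' T ∧ circLt P Q ν' ν

/-- `Circ[T;P;Q] ⊨ φ`. -/
def CircEntails (T : Set (PropForm V)) (P Q : Set V) (φ : PropForm V) : Prop :=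
  ∀ ν : V → Bool, CircModel T P Q ν → Sat ν φ

theorem eval_congr' {V : Type*} (ν μ : V → Bool) (φ : PropForm V)
    (h : ∀ x ∈ φ.vars, ν x = μ x) : φ.eval ν = φ.eval μ := by
  induction φ with
  | var v => exact h v rfl
  | tru => rfl
  | fls => rfl
  | neg φ ih => simp only [PropForm.eval]; rw [ih h]
  | conj φ ψ ih1 ih2 | disj φ ψ ih1 ih2 | impl φ ψ ih1 ih2 =>
    simp only [PropForm.eval]
    rw [ih1 fun x hx => h x (Or.inl hx), ih2 fun x hx => h x (Or.inr hx)]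

theorem satSet_congr {V : Type*} (ν μ : V → Bool) (T : Set (PropForm V))
    (h : ∀ x ∈ varsOf T, ν x = μ x) (hν : SatSet ν T) : SatSet μ T := by
  intro φ hφ
  have := hν φ hφ
  unfold Sat at *
  rw [← eval_congr' ν μ φ fun x hx => h x (Set.mem_biUnion hφ hx)]
  exact this

theorem continuous_eval {V : Type*} (φ : PropForm V) :
    Continuous (fun ν : V → Bool => φ.eval ν) := by
  induction φ with
  | var v => exact continuous_apply v
  | tru => exact continuous_const
  | fls => exact continuous_const
  | neg φ ih => exact (continuous_of_discreteTopology (f := fun b : Bool => !b)).comp ih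
  | conj φ ψ ih1 ih2 =>
    exact (continuous_of_discreteTopology (f := fun b : Bool × Bool => b.1 && b.2)).comp
      (ih1.prodMk ih2)
  | disj φ ψ ih1 ih2 =>
    exact (continuous_of_discreteTopology (f := fun b : Bool × Bool => b.1 || b.2)).comp
      (ih1.prodMk ih2)
  | impl φ ψ ih1 ih2 =>
    exact (continuous_of_discreteTopology (f := fun b : Bool × Bool => !b.1 || b.2)).comp
      (ih1.prodMk ih2)

/-- A formula over a finite set describing the valuation there. -/
theorem exists_diagram {V : Type*} (ν : V → Bool) (S : Set V) (u : Finset S) :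
    ∃ δ : PropForm V, δ.vars ⊆ S ∧
      ∀ μ : V → Bool, δ.eval μ = true ↔ ∀ x ∈ u, μ x = ν x := by
  classical
  induction u using Finset.induction_on with
  | empty => exact ⟨.tru, by simp [PropForm.vars], by simp [PropForm.eval]⟩
  | insert a u ha ih =>
    obtain ⟨δ, h1, h2⟩ := ih
    cases hv : ν a with
    | true =>
      refine ⟨.conj (.var a) δ, ?_, ?_⟩
      · simp [PropForm.vars, h1, Set.insert_subset_iff]
      · intro μ
        rw [Finset.forall_mem_insert, ← h2 μ, hv]
        simp [PropForm.eval]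
    | false =>
      refine ⟨.conj (.neg (.var a)) δ, ?_, ?_⟩
      · simp [PropForm.vars, h1, Set.insert_subset_iff]
      · intro μ
        rw [Finset.forall_mem_insert, ← h2 μ, hv]
        simp [PropForm.eval]

theorem exists_extension {V : Type*} (ν : V → Bool) (S : Set V) (T : Set (PropForm V))
    (h : SatSet ν (Cn S T)) : ∃ μ : V → Bool, SatSet μ T ∧ ∀ x ∈ S, μ x = ν x := by
  have hcl : IsClosed {μ : V → Bool | SatSet μ T} := by
    have : {μ : V → Bool | SatSet μ T} = ⋂ φ ∈ T, {μ | φ.eval μ = true} := by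
      ext μ; simp [SatSet, Sat]
    rw [this]
    exact isClosed_biInter fun φ _ => isClosed_eq (continuous_eval φ) continuous_const
  obtain ⟨μ, h1, h2⟩ := hcl.isCompact.inter_iInter_nonempty
    (fun x : S => {μ : V → Bool | μ x = ν x})
    (fun x => isClosed_eq (continuous_apply _) continuous_const) (by
      intro u
      obtain ⟨δ, hδ, hδ'⟩ := exists_diagram ν S u
      by_contra hne
      have hn : Sat ν (.neg δ) := by
        refine h _ ⟨hδ, fun μ hμ => ?_⟩
        by_contra hc
        have hc' : δ.eval μ = true := by simpa [Sat, PropForm.eval] using hc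
        exact hne ⟨μ, hμ, by simpa using (hδ' μ).1 hc'⟩
      have := (hδ' ν).2 fun _ _ => rfl
      simp [Sat, PropForm.eval, this] at hn)
  exact ⟨μ, h1, fun x hx => Set.mem_iInter.1 h2 ⟨x, hx⟩⟩

/-- with `P ∪ Q ⊇ L(T₂)`, circumscriptive consequences of `T₁ ∪ γ`
in `𝓛(T₁)` are circumscriptive consequences of `T₁ ∪ T₂`. -/
theorem circ_gamma_T {V : Type*} (T₁ T₂ γ : Set (PropForm V)) (P Q : Set V)
    (hPQ : P ∪ Q ⊆ varsOf T₁ ∪ varsOf T₂) (hP : P ⊆ varsOf T₁)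
    (hT₂ : varsOf T₂ ⊆ P ∪ Q)
    (hγ : EquivTheories γ (Cn (varsOf T₁ ∩ varsOf T₂) T₂)) :
    ∀ φ ∈ FormsOver (varsOf T₁),
      CircEntails (T₁ ∪ γ) P Q φ → CircEntails (T₁ ∪ T₂) P Q φ := by
  classical
  intro φ _ hc ν hν
  obtain ⟨hs, hmin⟩ := hν
  have hs1 : SatSet ν T₁ := fun ψ hψ => hs ψ (Or.inl hψ)
  have hs2 : SatSet ν T₂ := fun ψ hψ => hs ψ (Or.inr hψ)
  have hsγ : SatSet ν γ := (hγ ν).2 fun ψ hψ => hψ.2 ν hs2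
  refine hc ν ⟨fun ψ hψ => hψ.elim (hs1 ψ) (hsγ ψ), ?_⟩
  rintro ⟨ν', hν', hlt⟩
  obtain ⟨μ, hμ, hag⟩ := exists_extension ν' (varsOf T₁ ∩ varsOf T₂) T₂
    ((hγ ν').1 fun ψ hψ => hν' ψ (Or.inr hψ))
  let ν₂ : V → Bool := fun x => if x ∈ varsOf T₂ then μ x else ν' x
  have e1 : ∀ x ∈ varsOf T₁, ν' x = ν₂ x := by
    intro x hx
    by_cases h2 : x ∈ varsOf T₂
    · simp [ν₂, h2, hag x ⟨hx, h2⟩]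
    · simp [ν₂, h2]
  have e2 : ∀ x ∈ varsOf T₂, μ x = ν₂ x := by
    intro x hx
    simp [ν₂, hx]
  have e3 : {x | x ∈ P ∧ ν₂ x = true} = {x | x ∈ P ∧ ν' x = true} := by
    ext x
    exact and_congr_right fun hx => by rw [e1 x (hP hx)]
  refine hmin ⟨ν₂, fun ψ hψ => hψ.elim
    (satSet_congr ν' ν₂ T₁ e1 (fun ψ hψ => hν' ψ (Or.inl hψ)) ψ)
    (satSet_congr μ ν₂ T₂ e2 hμ ψ), ⟨fun x hx => ?_, ?_⟩, ?_⟩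
  · have h2 : x ∉ varsOf T₂ := fun h => hx (hT₂ h)
    simpa [ν₂, h2] using hlt.1.1 x hx
  · rw [e3]; exact hlt.1.2
  · rw [e3]; exact hlt.2

end NMR
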